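/- There exists a universal constant C > 0 such that for every q > 0 and every global C¹ solution (X,V) : ℝ → ℝ³ × ℝ³ of the repulsive Kepler ODE with X(t) ≠ 0 for all t and conserved energy H = a² (a > 0), the function τ ↦ |X(τ)|⁻² is integrable on ℝ and ∫_{−∞}^{∞} |X(τ)|⁻² dτ ≤ C·a/q. -/

import Mathlib

/-!
The radial velocity `w = ⟨X, V⟩ / |X| = d|X|/dt` satisfies, by the ODE,
`w' = (|V|² - w²) / |X| + q / (2|X|²) ≥ q / (2|X|²)`,
since `|w| ≤ |V|` by Cauchy-Schwarz. Energy conservation gives `|w| ≤ |V| ≤ a`, so integrating the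
inequality over any interval `[s, t]` yields
`∫ |X|⁻² ≤ (2/q) (w(t) - w(s)) ≤ 4a/q`.
Hence `|X|⁻²` is integrable on the line and `C = 4` works.
-/

open MeasureTheory

noncomputable section

/-- Euclidean three-space. -/
abbrev R3 : Type := EuclideanSpace ℝ (Fin 3)

/-- The derivative of the radial velocity along the repulsive Kepler flow. -/
lemma hasDerivAt_radial_velocity {q : ℝ} {X V : ℝ → R3} {t : ℝ} (h0 : X t ≠ 0)
    (hX : HasDerivAt X (V t) t)
    (hV : HasDerivAt V ((q / 2 / ‖X t‖ ^ 3) • X t) t) :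
    HasDerivAt (fun s => inner ℝ (X s) (V s) / ‖X s‖)
      ((‖V t‖ ^ 2 - (inner ℝ (X t) (V t) / ‖X t‖) ^ 2) / ‖X t‖ + q / 2 * (‖X t‖ ^ 2)⁻¹) t := by
  have hr : ‖X t‖ ≠ 0 := norm_ne_zero_iff.mpr h0
  have hn : HasDerivAt (fun s => ‖X s‖) (inner ℝ (X t) (V t) / ‖X t‖) t := by
    have h := hX.norm_sq.sqrt (pow_ne_zero 2 hr)
    simp only [Real.sqrt_sq (norm_nonneg _)] at h
    convert h using 1
    field_simp
  refine ((hX.inner ℝ hV).fun_div hn hr).congr_deriv ?_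
  rw [real_inner_smul_right, real_inner_self_eq_norm_sq, real_inner_self_eq_norm_sq]
  field_simp
  ring

lemma abs_radial_velocity_le {X V : R3} : |inner ℝ X V / ‖X‖| ≤ ‖V‖ := by
  rw [abs_div, abs_norm]
  exact div_le_of_le_mul₀ (norm_nonneg _) (norm_nonneg _)
    ((abs_real_inner_le_norm X V).trans_eq (mul_comm _ _))

/-- There is a universal constant `C > 0` such that for every `q > 0` and every global
solution of the repulsive Kepler ODE with `X(t) ≠ 0` and conserved energy
`|V(t)|² + q/|X(t)| = a²` (`a > 0`), the function `τ ↦ |X(τ)|⁻²` is integrable on `ℝ`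
with `∫ |X(τ)|⁻² dτ ≤ C·a/q`. -/
theorem kepler_inverse_square_integral :
    ∃ C : ℝ, 0 < C ∧
      ∀ (q a : ℝ) (X V : ℝ → R3), 0 < q → 0 < a →
        (∀ t, X t ≠ 0) →
        (∀ t, HasDerivAt X (V t) t) →
        (∀ t, HasDerivAt V ((q / 2 / ‖X t‖ ^ 3) • X t) t) →
        (∀ t, ‖V t‖ ^ 2 + q / ‖X t‖ = a ^ 2) →
        Integrable (fun τ : ℝ => (‖X τ‖ ^ 2)⁻¹) ∧
          ∫ τ : ℝ, (‖X τ‖ ^ 2)⁻¹ ≤ C * a / q := by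
  refine ⟨4, by norm_num, ?_⟩
  intro q a X V hq ha h0 hX hV hE
  have hw := fun t => hasDerivAt_radial_velocity (h0 t) (hX t) (hV t)
  have hwa : ∀ t, |inner ℝ (X t) (V t) / ‖X t‖| ≤ a := by
    intro t
    refine abs_radial_velocity_le.trans (abs_le_of_sq_le_sq' ?_ ha.le).2
    have : 0 ≤ q / ‖X t‖ := by positivity
    linarith [hE t]
  have hcX : Continuous X := continuous_iff_continuousAt.mpr fun t => (hX t).continuousAt
  have hc : Continuous (fun τ : ℝ => (‖X τ‖ ^ 2)⁻¹) :=
    (hcX.norm.pow 2).inv₀ fun t => pow_ne_zero 2 (norm_ne_zero_iff.mpr (h0 t))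
  have hbound : ∀ s t : ℝ, s ≤ t → ∫ τ in s..t, (‖X τ‖ ^ 2)⁻¹ ≤ 4 * a / q := by
    intro s t hst
    have h := intervalIntegral.integral_le_sub_of_hasDeriv_right_of_le hst
      (φ := fun τ => q / 2 * (‖X τ‖ ^ 2)⁻¹)
      (fun τ _ => (hw τ).continuousAt.continuousWithinAt)
      (fun τ _ => (hw τ).hasDerivWithinAt)
      (hc.const_mul (q / 2)).integrableOn_Icc
      (fun τ _ => by
        have h1 := sq_le_sq' (abs_le.mp (abs_radial_velocity_le (X := X τ) (V := V τ))).1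
          (abs_le.mp (abs_radial_velocity_le (X := X τ) (V := V τ))).2
        have : 0 ≤ (‖V τ‖ ^ 2 - (inner ℝ (X τ) (V τ) / ‖X τ‖) ^ 2) / ‖X τ‖ :=
          div_nonneg (sub_nonneg.mpr h1) (norm_nonneg _)
        linarith)
    rw [intervalIntegral.integral_const_mul] at h
    rw [le_div_iff₀ hq]
    linarith [(abs_le.mp (hwa t)).2, (abs_le.mp (hwa s)).1]
  have hneg : Filter.Tendsto (fun n : ℝ => -n) Filter.atTop Filter.atBot :=
    Filter.tendsto_neg_atTop_atBot
  have hint : Integrable (fun τ : ℝ => (‖X τ‖ ^ 2)⁻¹) := by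
    refine integrable_of_intervalIntegral_norm_bounded (4 * a / q)
      (fun n : ℝ => hc.integrableOn_Ioc) hneg Filter.tendsto_id ?_
    filter_upwards [Filter.eventually_ge_atTop 0] with n hn
    have hnorm : ∀ τ, ‖(‖X τ‖ ^ 2)⁻¹‖ = (‖X τ‖ ^ 2)⁻¹ := fun τ =>
      Real.norm_of_nonneg (by positivity)
    simp only [hnorm]
    exact hbound _ _ (by simp only [id]; linarith)
  refine ⟨hint, le_of_tendsto (intervalIntegral_tendsto_integral hint hneg Filter.tendsto_id) ?_⟩
  filter_upwards [Filter.eventually_ge_atTop 0] with n hn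
  exact hbound _ _ (by simp only [id]; linarith)
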